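/- Let 1 < d < D − 1 be integers, let P be an orthogonal projection of rank d on ℂ^D, and let φ, ψ ∈ ℂ^D be two fixed orthonormal vectors. Let 0 ≤ a ≤ 1/4. Then the Haar probability of the set of U ∈ U(D) with |⟨φ, U P U⁻¹ ψ⟩|² ≥ a equals ((D−1)!/((d−1)!·(D−d−1)!)) · ∫_{1/2 − √(1/4 − a)}^{1/2 + √(1/4 − a)} (w·(1−w) − a)^{D−2} / ( w^{D−d−1}·(1−w)^{d−1} ) dw. -/

import Mathlib

open MeasureTheory Filter

noncomputable section

/-- The unitary group U(D) of ℂ^D. -/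
abbrev UG (D : ℕ) := Matrix.unitaryGroup (Fin D) ℂ

instance (D : ℕ) : MeasurableSpace (UG D) := borel _
instance (D : ℕ) : BorelSpace (UG D) := ⟨rfl⟩

/-- The squared euclidean norm ‖v‖² on ℂ^D. -/
def nsq {D : ℕ} (v : Fin D → ℂ) : ℝ := ∑ i, ‖v i‖ ^ 2

/-- The hermitian inner product ⟨v,w⟩ on ℂ^D (conjugate-linear in the first variable). -/
def dotc {D : ℕ} (v w : Fin D → ℂ) : ℂ := ∑ i, (starRingEnd ℂ) (v i) * w i

/-- The orthogonal projection U P U⁻¹ onto the image under U of the range of P. -/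
def rotProj {D : ℕ} (U : UG D) (P : Matrix (Fin D) (Fin D) ℂ) : Matrix (Fin D) (Fin D) ℂ :=
  (U : Matrix (Fin D) (Fin D) ℂ) * P * ((U⁻¹ : UG D) : Matrix (Fin D) (Fin D) ℂ)

section
open MeasureTheory Filter

/-- density of the gamma law of shape `n+1` -/
def gmd (n : ℕ) (x : ℝ) : ENNReal := ENNReal.ofReal (x ^ n / (n.factorial : ℝ) * Real.exp (-x))

/-- the gamma law of shape `n+1` -/
def gm (n : ℕ) : Measure ℝ := (volume.restrict (Set.Ioi 0)).withDensity (gmd n)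

lemma measurable_gmd (n : ℕ) : Measurable (gmd n) := by
  unfold gmd; fun_prop

instance (n : ℕ) : SFinite (gm n) := by unfold gm; infer_instance

lemma lintegral_gm (n : ℕ) (F : ℝ → ENNReal) (hF : Measurable F) :
    ∫⁻ x, F x ∂(gm n) = ∫⁻ x in Set.Ioi 0, gmd n x * F x := by
  rw [gm, lintegral_withDensity_eq_lintegral_mul _ (measurable_gmd n) hF]; rfl

lemma lintegral_pow_exp (n : ℕ) (r : ℝ) (hr : 0 < r) :
    ∫⁻ x in Set.Ioi 0, ENNReal.ofReal (x ^ n * Real.exp (-(r * x)))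
      = ENNReal.ofReal (n.factorial / r ^ (n + 1)) := by
  have h := Real.integral_rpow_mul_exp_neg_mul_Ioi (a := n + 1) (r := r) (by positivity) hr
  simp only [add_sub_cancel_right, Real.rpow_natCast] at h
  have h2 : ∫ (t : ℝ) in Set.Ioi 0, t ^ n * Real.exp (-(r * t)) = n.factorial / r ^ (n + 1) := by
    rw [h, Real.Gamma_nat_eq_factorial]
    have : (1 / r) ^ ((n : ℝ) + 1) = (1 / r) ^ (n + 1) := by
      rw [← Real.rpow_natCast]; push_cast; rfl
    rw [this, div_pow, one_pow]; field_simp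
  rw [← h2, ofReal_integral_eq_lintegral_ofReal]
  · by_contra hc
    have := integral_undef hc
    rw [h2] at this
    have h3 : 0 < (n.factorial : ℝ) / r ^ (n + 1) := by positivity
    linarith
  · filter_upwards [ae_restrict_mem measurableSet_Ioi] with x hx
    have : (0 : ℝ) < x := hx
    positivity

lemma gm_tail (c : ℝ) (hc : 0 ≤ c) : gm 0 {x | c ≤ x} = ENNReal.ofReal (Real.exp (-c)) := by
  have e : {x : ℝ | c ≤ x} = Set.Ici c := rfl
  rw [e, gm, withDensity_apply _ measurableSet_Ici, Measure.restrict_restrict measurableSet_Ici]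
  have : (Set.Ici c ∩ Set.Ioi (0:ℝ) : Set ℝ) =ᵐ[volume] Set.Ioi c := by
    have h1 : (Set.Ici c ∩ Set.Ioi (0:ℝ) : Set ℝ) =ᵐ[volume] (Set.Ioi c ∩ Set.Ioi 0 : Set ℝ) :=
      (Ioi_ae_eq_Ici.symm).inter (ae_eq_refl _)
    refine h1.trans ?_
    rw [Set.Ioi_inter_Ioi, sup_eq_left.mpr hc]
    exact ae_eq_refl _
  rw [Measure.restrict_congr_set this, ← integral_exp_neg_Ioi,
    ofReal_integral_eq_lintegral_ofReal]
  · simp [gmd]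
  · exact integrableOn_exp_neg_Ioi c
  · exact Eventually.of_forall fun x => (Real.exp_pos _).le

lemma gm_conv (n : ℕ) (F : ℝ → ENNReal) (hF : Measurable F) :
    ∫⁻ x, ∫⁻ y, F (x + y) ∂(gm 0) ∂(gm n) = ∫⁻ r, F r ∂(gm (n + 1)) := by
  rw [lintegral_gm _ _ hF]
  have hm : Measurable fun x => ∫⁻ y, F (x + y) ∂(gm 0) := by
    apply Measurable.lintegral_prod_right' (f := fun p : ℝ × ℝ => F (p.1 + p.2))
    fun_prop
  rw [lintegral_gm _ _ hm]
  have h1 : ∀ x : ℝ, gmd n x * ∫⁻ y, F (x + y) ∂(gm 0) =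
      ∫⁻ r, gmd n x * ((Set.Ioi x).indicator (fun r => gmd 0 (r - x) * F r) r) := by
    intro x
    rw [lintegral_const_mul', lintegral_gm _ _ (by fun_prop), ← lintegral_indicator measurableSet_Ioi,
      ← lintegral_sub_right_eq_self _ x]
    · congr 2
      ext r
      by_cases h : x < r
      · simp [Set.indicator, h]
      · simp [Set.indicator, h]
    · exact ENNReal.ofReal_ne_top
  simp_rw [h1]
  have hm2 : Measurable fun p : ℝ × ℝ => gmd n p.1 *
      ((Set.Ioi p.1).indicator (fun r => gmd 0 (r - p.1) * F r) p.2) := by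
    refine ((measurable_gmd n).comp measurable_fst).mul ?_
    have : (fun p : ℝ × ℝ => (Set.Ioi p.1).indicator (fun r => gmd 0 (r - p.1) * F r) p.2) =
        {p : ℝ × ℝ | p.1 < p.2}.indicator (fun p => gmd 0 (p.2 - p.1) * F p.2) := by
      ext p; simp [Set.indicator]
    rw [this]
    refine Measurable.indicator ?_ (measurableSet_lt measurable_fst measurable_snd)
    exact ((measurable_gmd 0).comp (by fun_prop)).mul (by fun_prop)
  rw [lintegral_lintegral_swap hm2.aemeasurable, ← lintegral_indicator measurableSet_Ioi]
  congr 1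
  ext r
  by_cases hr : 0 < r
  · rw [Set.indicator_of_mem (show r ∈ Set.Ioi 0 from hr)]
    have h2 : ∀ x ∈ Set.Ioi (0:ℝ), gmd n x * (Set.Ioi x).indicator (fun r => gmd 0 (r - x) * F r) r
        = (Set.Iio r).indicator
          (fun x => ENNReal.ofReal (x ^ n / n.factorial) * (ENNReal.ofReal (Real.exp (-r)) * F r)) x := by
      intro x hx
      have hx' : 0 < x := hx
      by_cases h : x < r
      · rw [Set.indicator_of_mem (show r ∈ Set.Ioi x from h), Set.indicator_of_mem (show x ∈ Set.Iio r from h)]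
        rw [← mul_assoc, ← mul_assoc, gmd, gmd, ← ENNReal.ofReal_mul (by positivity),
          ← ENNReal.ofReal_mul (by positivity)]
        congr 2
        have : Real.exp (-r) = Real.exp (-x) * Real.exp (-(r-x)) := by
          rw [← Real.exp_add]; congr 1; ring
        rw [this]; simp; ring
      · rw [Set.indicator_of_notMem (show r ∉ Set.Ioi x from h), Set.indicator_of_notMem (show x ∉ Set.Iio r from h), mul_zero]
    rw [setLIntegral_congr_fun measurableSet_Ioi h2, lintegral_indicator measurableSet_Iio,
      Measure.restrict_restrict measurableSet_Iio, lintegral_mul_const _ (by fun_prop), ← mul_assoc, gmd,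
      ENNReal.ofReal_mul (by positivity)]
    congr 2
    rw [Set.Iio_inter_Ioi, Measure.restrict_congr_set Ioo_ae_eq_Ioc, ← ofReal_integral_eq_lintegral_ofReal,
      ← intervalIntegral.integral_of_le hr.le, intervalIntegral.integral_div, integral_pow]
    · congr 1
      rw [Nat.factorial_succ]; push_cast; field_simp; simp
    · exact (Continuous.integrableOn_Icc (by fun_prop)).mono_set Set.Ioc_subset_Icc_self
    · filter_upwards [ae_restrict_mem measurableSet_Ioc] with x hx
      have := hx.1
      positivity
  · rw [Set.indicator_of_notMem (show r ∉ Set.Ioi 0 from hr)]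
    rw [setLIntegral_congr_fun (g := fun _ => 0) measurableSet_Ioi, lintegral_zero]
    intro x hx
    have : ¬ (x < r) := fun h => hr (lt_trans hx h)
    simp [this]

lemma gm_beta (p q : ℕ) (G : ℝ → ENNReal) (hG : Measurable G) :
    ∫⁻ x, ∫⁻ y, G (x / (x + y)) ∂(gm q) ∂(gm p) =
      ∫⁻ t in Set.Ioo 0 1, ENNReal.ofReal ((p + q + 1).factorial / (p.factorial * q.factorial)
        * (t ^ p * (1 - t) ^ q)) * G t := by
  have hm : Measurable fun x => ∫⁻ y, G (x / (x + y)) ∂(gm q) := by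
    apply Measurable.lintegral_prod_right' (f := fun p : ℝ × ℝ => G (p.1 / (p.1 + p.2)))
    fun_prop
  rw [lintegral_gm _ _ hm]
  have h1 : ∀ x ∈ Set.Ioi (0:ℝ), gmd p x * ∫⁻ y, G (x / (x + y)) ∂(gm q) =
      ∫⁻ t in Set.Ioo (0:ℝ) 1, ENNReal.ofReal (x ^ (p + q + 1) * Real.exp (-(1 / t * x))) *
       (ENNReal.ofReal ((1 - t) ^ q / t ^ (q + 2) / (p.factorial * q.factorial)) * G t) := by
    intro x hx
    have hx' : 0 < x := hx
    rw [lintegral_gm _ _ (by fun_prop)]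
    have himg : (fun t => x * (1 - t) / t) '' Set.Ioo (0:ℝ) 1 = Set.Ioi 0 := by
      ext y
      constructor
      · rintro ⟨t, ⟨h0, h1⟩, rfl⟩
        have : 0 < 1 - t := by linarith
        simp only [Set.mem_Ioi]; positivity
      · intro hy
        have hy' : 0 < y := hy
        refine ⟨x / (x + y), ⟨by positivity, ?_⟩, ?_⟩
        · rw [div_lt_one (by positivity)]; linarith
        · simp only; field_simp; ring
    rw [← himg, lintegral_image_eq_lintegral_abs_deriv_mul (f' := fun t => - x / t ^ 2) measurableSet_Ioo]
    · rw [← lintegral_const_mul' _ _ (by exact ENNReal.ofReal_ne_top)]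
      apply setLIntegral_congr_fun measurableSet_Ioo
      rintro t ⟨h0, h1⟩
      have h1' : 0 < 1 - t := by linarith
      simp only
      have e : x / (x + x * (1 - t) / t) = t := by field_simp; ring
      rw [e, ← mul_assoc, ← mul_assoc, ← mul_assoc, gmd, gmd, ← ENNReal.ofReal_mul (by positivity),
          ← ENNReal.ofReal_mul (by positivity), ← ENNReal.ofReal_mul (by positivity)]
      congr 2
      have e2 : |-x / t ^ 2| = x / t ^ 2 := by
        rw [abs_div, abs_neg, abs_of_pos hx', abs_of_pos (by positivity)]
      have e3 : Real.exp (-(1 / t * x)) = Real.exp (-x) * Real.exp (-(x * (1 - t) / t)) := by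
        rw [← Real.exp_add]; congr 1; field_simp; ring
      rw [e2, e3, div_pow, mul_pow]
      field_simp
      ring
    · intro t ht
      have h0 : t ≠ 0 := ht.1.ne'
      apply HasDerivAt.hasDerivWithinAt
      have : HasDerivAt (fun t => x * (1 - t) / t) _ t :=
        ((((hasDerivAt_id t).const_sub 1).const_mul x).div (hasDerivAt_id t) h0)
      refine this.congr_deriv ?_
      simp only [id]; ring
    · intro t ht s hs h
      have h0 := ht.1
      have h2 := hs.1
      simp only at h
      field_simp at h
      linarith
  rw [setLIntegral_congr_fun measurableSet_Ioi h1, lintegral_lintegral_swap]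
  · apply setLIntegral_congr_fun measurableSet_Ioo
    rintro t ⟨h0, h1⟩
    have h1' : 0 < 1 - t := by linarith
    simp only
    rw [lintegral_mul_const _ (by fun_prop), lintegral_pow_exp _ _ (by positivity), ← mul_assoc,
      ← ENNReal.ofReal_mul (by positivity)]
    congr 2
    rw [div_pow, one_pow]
    field_simp
    ring
  · apply Measurable.aemeasurable
    unfold Function.uncurry
    fun_prop

end

section
open MeasureTheory Filter

/-- standard complex Gaussian -/
def g1 : Measure ℂ := (volume : Measure ℂ).withDensity
  (fun z => ENNReal.ofReal (Real.pi⁻¹ * Real.exp (-‖z‖ ^ 2)))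

lemma g1_lintegral (F : ℝ → ENNReal) (hF : Measurable F) :
    ∫⁻ z, F (‖z‖ ^ 2) ∂g1 = ∫⁻ x, F x ∂(gm 0) := by
  rw [g1, lintegral_withDensity_eq_lintegral_mul _ (by fun_prop) (by fun_prop),
    ← Complex.lintegral_comp_polarCoord_symm, lintegral_gm _ _ hF]
  simp only [Pi.mul_apply, Complex.norm_polarCoord_symm, sq_abs, smul_eq_mul]
  have ht : polarCoord.target = Set.Ioi (0 : ℝ) ×ˢ Set.Ioo (-Real.pi) Real.pi := rfl
  rw [ht, Measure.volume_eq_prod, ← Measure.prod_restrict, lintegral_prod _ (by fun_prop)]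
  simp only [lintegral_const, Measure.restrict_apply MeasurableSet.univ, Set.univ_inter,
    Real.volume_Ioo]
  have himg : (fun r : ℝ => r ^ 2) '' Set.Ioi (0:ℝ) = Set.Ioi 0 := by
    ext y
    constructor
    · rintro ⟨t, h0, rfl⟩
      have h0' : 0 < t := h0
      simp only [Set.mem_Ioi]; positivity
    · intro hy
      have hy' : 0 < y := hy
      exact ⟨√y, by simpa using hy', Real.sq_sqrt hy'.le⟩
  conv_rhs => rw [← himg]
  rw [lintegral_image_eq_lintegral_abs_deriv_mul (f' := fun t => 2 * t) measurableSet_Ioi]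
  · apply setLIntegral_congr_fun measurableSet_Ioi
    intro t ht
    have h0 : 0 < t := ht
    have hp := Real.pi_pos
    simp only [gmd]
    have e2 : Real.pi - -Real.pi = 2 * Real.pi := by ring
    rw [e2, mul_comm _ (ENNReal.ofReal (2 * Real.pi)), ← mul_assoc, ← mul_assoc, ← mul_assoc,
      ← ENNReal.ofReal_mul (by positivity), ← ENNReal.ofReal_mul (by positivity),
      ← ENNReal.ofReal_mul (by positivity)]
    congr 2
    rw [abs_of_pos (by positivity)]
    simp
    field_simp
  · intro t ht
    apply HasDerivAt.hasDerivWithinAt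
    simpa using hasDerivAt_pow 2 t
  · intro t ht s hs h
    have h0 : 0 < t := ht
    have h1 : 0 < s := hs
    simp only at h
    exact (pow_left_inj₀ h0.le h1.le two_ne_zero).1 h

lemma gm0_univ : gm 0 Set.univ = 1 := by
  rw [gm, withDensity_apply _ MeasurableSet.univ, Measure.restrict_univ]
  have := lintegral_pow_exp 0 1 one_pos
  simpa [gmd] using this

instance : IsProbabilityMeasure (gm 0) := ⟨gm0_univ⟩

instance : IsProbabilityMeasure g1 := ⟨by
  have := g1_lintegral (fun _ => 1) measurable_const
  simpa using this⟩

lemma g1_map : g1.map (fun z => ‖z‖ ^ 2) = gm 0 := by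
  ext s hs
  rw [Measure.map_apply (by fun_prop) hs, ← lintegral_indicator_one hs, ← g1_lintegral _ (measurable_one.indicator hs),
    ← lintegral_indicator_one (by measurability)]
  rfl

instance : NullSingletonClass g1 := by
  unfold g1; infer_instance

lemma lintegral_pi_prod {X : Type} [MeasurableSpace X] (μ : Measure X) [SigmaFinite μ] :
    ∀ (n : ℕ) (f : Fin n → X → ENNReal), (∀ i, Measurable (f i)) →
    ∫⁻ x : Fin n → X, ∏ i, f i (x i) ∂(Measure.pi fun _ => μ) = ∏ i, ∫⁻ y, f i y ∂μ := by
  intro n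
  induction n with
  | zero => intro f hf; simp
  | succ n ih =>
    intro f hf
    have h := (measurePreserving_piFinSuccAbove (fun _ : Fin (n+1) => μ) 0)
    rw [← h.symm.lintegral_comp (by fun_prop), lintegral_prod _ (by fun_prop)]
    simp only [Fin.prod_univ_succ]
    simp only [MeasurableEquiv.piFinSuccAbove_symm_apply, Fin.insertNthEquiv_zero, Fin.consEquiv_apply, Fin.cons_zero, Fin.cons_succ]
    have := fun i => hf (Fin.succ i)
    have e : ∀ x : X, ∫⁻ y : Fin n → X, f 0 x * ∏ i : Fin n, f i.succ (y i) ∂(Measure.pi fun _ => μ)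
        = f 0 x * ∏ i : Fin n, ∫⁻ y, f i.succ y ∂μ := by
      intro x
      rw [lintegral_const_mul _ (by fun_prop), ih _ this]
    rw [← lintegral_mul_const _ (hf 0)]
    exact lintegral_congr e

/-- standard complex Gaussian on `ℂ^D` -/
def gD (D : ℕ) : Measure (Fin D → ℂ) := Measure.pi fun _ => g1

instance (D : ℕ) : IsProbabilityMeasure (gD D) := by unfold gD; infer_instance

lemma gD_eq (D : ℕ) : gD D = (volume : Measure (Fin D → ℂ)).withDensity
    (fun z => ∏ i, ENNReal.ofReal (Real.pi⁻¹ * Real.exp (-‖z i‖ ^ 2))) := by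
  apply Measure.pi_eq
  intro s hs
  rw [withDensity_apply _ (MeasurableSet.univ_pi hs), ← lintegral_indicator (MeasurableSet.univ_pi hs)]
  have e : ∀ i, g1 (s i) = ∫⁻ z, (s i).indicator
      (fun z : ℂ => ENNReal.ofReal (Real.pi⁻¹ * Real.exp (-‖z‖ ^ 2))) z := by
    intro i
    rw [g1, withDensity_apply _ (hs i), lintegral_indicator (hs i)]
  rw [Finset.prod_congr rfl (fun i _ => e i)]
  rw [← lintegral_pi_prod]
  · rw [volume_pi]
    congr 1
    ext z
    by_cases h : z ∈ Set.univ.pi s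
    · rw [Set.indicator_of_mem h]
      refine Finset.prod_congr rfl fun i _ => ?_
      rw [Set.indicator_of_mem (h i trivial)]
    · rw [Set.indicator_of_notMem h]
      simp only [Set.mem_pi, Set.mem_univ, true_imp_iff, not_forall] at h
      obtain ⟨i, hi⟩ := h
      rw [Finset.prod_eq_zero (Finset.mem_univ i)]
      rw [Set.indicator_of_notMem hi]
  · intro i
    exact Measurable.indicator (by fun_prop) (hs i)

end

section
open MeasureTheory Filter ProbabilityTheory


lemma iIndep_gD (D : ℕ) : iIndepFun (fun (i : Fin D) (z : Fin D → ℂ) => ‖z i‖ ^ 2) (gD D) :=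
  iIndepFun_pi (μ := fun _ : Fin D => g1) (X := fun _ (z : ℂ) => ‖z‖ ^ 2) (fun _ => by fun_prop)

lemma gD_map_single (D : ℕ) (i : Fin D) : (gD D).map (fun z => ‖z i‖ ^ 2) = gm 0 := by
  rw [← g1_map]
  have h := (measurePreserving_eval (fun _ : Fin D => g1) i).map_eq
  conv_rhs => rw [← h]
  rw [Measure.map_map (by fun_prop) (by fun_prop)]
  rfl

lemma gD_map_sum (D : ℕ) (n : ℕ) : ∀ S : Finset (Fin D), S.card = n + 1 →
    (gD D).map (fun z => ∑ i ∈ S, ‖z i‖ ^ 2) = gm n := by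
  induction n with
  | zero =>
    intro S hS
    obtain ⟨i, rfl⟩ := Finset.card_eq_one.1 hS
    simpa using gD_map_single D i
  | succ n ih =>
    intro S hS
    obtain ⟨i, T, hi, rfl, hT⟩ := Finset.card_eq_succ.1 hS
    have hind := (iIndep_gD D).indepFun_finsetSum_of_notMem (fun i => by fun_prop) hi
    have hmap := (indepFun_iff_map_prod_eq_prod_map_map (Measurable.aemeasurable (by fun_prop)) (Measurable.aemeasurable (by fun_prop))).1 hind
    rw [gD_map_single] at hmap
    have e : (∑ j ∈ T, fun z : Fin D → ℂ => ‖z j‖ ^ 2) = fun z => ∑ j ∈ T, ‖z j‖ ^ 2 := by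
      ext z; simp
    rw [e, ih T hT] at hmap
    have e2 : (fun z : Fin D → ℂ => ∑ j ∈ insert i T, ‖z j‖ ^ 2) =
      (fun p : ℝ × ℝ => p.1 + p.2) ∘ (fun z => (∑ j ∈ T, ‖z j‖ ^ 2, ‖z i‖ ^ 2)) := by
      ext z; simp [Finset.sum_insert hi, add_comm]
    rw [e2, ← Measure.map_map (by fun_prop) (by fun_prop), hmap]
    ext s hs
    rw [← lintegral_indicator_one hs, ← lintegral_indicator_one hs, ← gm_conv _ _ (measurable_one.indicator hs),
      lintegral_map (measurable_one.indicator hs) (by fun_prop), lintegral_prod]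
    exact ((measurable_one.indicator hs).comp (by fun_prop)).aemeasurable

lemma gD_map_pair (D p q : ℕ) (S T : Finset (Fin D)) (hST : Disjoint S T) (hS : S.card = p + 1)
    (hT : T.card = q + 1) :
    (gD D).map (fun z => (∑ i ∈ S, ‖z i‖ ^ 2, ∑ i ∈ T, ‖z i‖ ^ 2)) = (gm p).prod (gm q) := by
  have h := (iIndep_gD D).indepFun_finset S T hST (fun i => by fun_prop)
  have h2 := h.comp (φ := fun x : S → ℝ => ∑ i, x i) (ψ := fun x : T → ℝ => ∑ i, x i)
    (by fun_prop) (by fun_prop)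
  have h3 := (indepFun_iff_map_prod_eq_prod_map_map (Measurable.aemeasurable (by fun_prop)) (Measurable.aemeasurable (by fun_prop))).1 h2
  rw [← gD_map_sum D p S hS, ← gD_map_sum D q T hT]
  have e : ∀ S : Finset (Fin D), ((fun x : S → ℝ => ∑ i, x i) ∘ fun (a : Fin D → ℂ) (i : S) => ‖a i‖ ^ 2)
      = fun z => ∑ i ∈ S, ‖z i‖ ^ 2 := by
    intro S
    ext z
    simp only [Function.comp]
    rw [Finset.sum_coe_sort S (fun i => ‖z i‖ ^ 2)]
  rw [e, e] at h3
  rw [← h3]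

lemma gD_beta (D p q : ℕ) (S T : Finset (Fin D)) (hST : Disjoint S T) (hS : S.card = p + 1)
    (hT : T.card = q + 1) (G : ℝ → ENNReal) (hG : Measurable G) :
    ∫⁻ z, G ((∑ i ∈ S, ‖z i‖ ^ 2) / (∑ i ∈ S, ‖z i‖ ^ 2 + ∑ i ∈ T, ‖z i‖ ^ 2)) ∂(gD D) =
      ∫⁻ t in Set.Ioo 0 1, ENNReal.ofReal ((p + q + 1).factorial / (p.factorial * q.factorial)
        * (t ^ p * (1 - t) ^ q)) * G t := by
  rw [← gm_beta p q G hG]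
  have hm : Measurable fun x : ℝ × ℝ => G (x.1 / (x.1 + x.2)) := by fun_prop
  rw [← lintegral_prod (fun x : ℝ × ℝ => G (x.1 / (x.1 + x.2))) (hm.aemeasurable),
    ← gD_map_pair D p q S T hST hS hT, lintegral_map hm (by fun_prop)]

lemma gm_ae_pos (n : ℕ) : ∀ᵐ x ∂(gm n), 0 < x :=
  (withDensity_absolutelyContinuous _ _).ae_le (ae_restrict_mem measurableSet_Ioi)

lemma gD_tail (D n : ℕ) (i : Fin D) (T : Finset (Fin D)) (hi : i ∉ T) (hT : T.card = n + 1)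
    (a s : ℝ) (ha : 0 ≤ a) (hs : 0 < s) :
    gD D {k | a * (‖k i‖ ^ 2 + ∑ j ∈ T, ‖k j‖ ^ 2) ≤ s * ‖k i‖ ^ 2} =
      ENNReal.ofReal ((max 0 (1 - a / s)) ^ (n + 1)) := by
  have hp := gD_map_pair D n 0 T {i} (by simpa using hi) hT (by simp)
  have hms : MeasurableSet {p : ℝ × ℝ | a * (p.2 + p.1) ≤ s * p.2} :=
    measurableSet_le (by fun_prop) (by fun_prop)
  have e : gD D {k | a * (‖k i‖ ^ 2 + ∑ j ∈ T, ‖k j‖ ^ 2) ≤ s * ‖k i‖ ^ 2} =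
      ((gm n).prod (gm 0)) {p : ℝ × ℝ | a * (p.2 + p.1) ≤ s * p.2} := by
    rw [← hp, Measure.map_apply (by fun_prop) hms]
    simp
  rw [e, Measure.prod_apply hms]
  by_cases h : a < s
  · have hpos : 0 < s - a := by linarith
    have h1 : ∀ᵐ y ∂(gm n), gm 0 (Prod.mk y ⁻¹' {p : ℝ × ℝ | a * (p.2 + p.1) ≤ s * p.2}) =
        ENNReal.ofReal (Real.exp (-(a / (s - a) * y))) := by
      filter_upwards [gm_ae_pos n] with y hy
      rw [← gm_tail _ (by positivity)]
      congr 1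
      ext x
      simp only [Set.mem_preimage, Set.mem_ofPred_eq]
      rw [div_mul_eq_mul_div, div_le_iff₀ hpos]
      constructor <;> intro h <;> linarith
    rw [lintegral_congr_ae h1, lintegral_gm _ _ (by fun_prop)]
    have h2 : ∀ y ∈ Set.Ioi (0:ℝ), gmd n y * ENNReal.ofReal (Real.exp (-(a / (s - a) * y))) =
        ENNReal.ofReal (1 / n.factorial) * ENNReal.ofReal (y ^ n * Real.exp (-(s / (s - a) * y))) := by
      intro y hy
      have hy' : 0 < y := hy
      rw [gmd, ← ENNReal.ofReal_mul (by positivity), ← ENNReal.ofReal_mul (by positivity)]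
      congr 1
      have : Real.exp (-(s / (s - a) * y)) = Real.exp (-y) * Real.exp (-(a / (s - a) * y)) := by
        rw [← Real.exp_add]; congr 1; field_simp; ring
      rw [this]; ring
    rw [setLIntegral_congr_fun measurableSet_Ioi h2, lintegral_const_mul _ (by fun_prop),
      lintegral_pow_exp _ _ (by positivity), ← ENNReal.ofReal_mul (by positivity)]
    congr 1
    have e3 : 1 - a / s = (s - a) / s := by field_simp
    rw [e3, max_eq_right (by positivity), div_pow, div_pow]
    field_simp
  · have hmax : max 0 (1 - a / s) = 0 := by
      apply max_eq_left
      have : 1 ≤ a / s := by rw [le_div_iff₀ hs]; linarith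
      linarith
    rw [hmax, zero_pow (by omega), ENNReal.ofReal_zero, lintegral_eq_zero_iff (measurable_measure_prodMk_left hms)]
    filter_upwards [gm_ae_pos n] with y hy
    simp only [Pi.zero_apply]
    refine measure_mono_null ?_ (gm_ae_pos 0)
    intro x hx hx'
    simp only [Set.mem_preimage, Set.mem_ofPred_eq] at hx hx'
    push Not at h
    have : 0 < a * y := mul_pos (by linarith) hy
    nlinarith [mul_nonneg (sub_nonneg.2 h) (hx' : 0 < x).le]

end

section
open MeasureTheory Filter ProbabilityTheory


lemma dotc_eq {D : ℕ} (v w : Fin D → ℂ) : dotc v w = star v ⬝ᵥ w := rfl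

lemma dotc_self {D : ℕ} (v : Fin D → ℂ) : dotc v v = (nsq v : ℂ) := by
  simp [dotc, nsq, Complex.conj_mul']

lemma star_mul_self_UG {D : ℕ} (U : UG D) :
    (star (U : Matrix (Fin D) (Fin D) ℂ)) * (U : Matrix (Fin D) (Fin D) ℂ) = 1 :=
  Unitary.coe_star_mul_self U

lemma dotc_mulVec {D : ℕ} (U : UG D) (v w : Fin D → ℂ) :
    dotc ((U : Matrix (Fin D) (Fin D) ℂ).mulVec v) ((U : Matrix (Fin D) (Fin D) ℂ).mulVec w) = dotc v w := by
  rw [dotc_eq, dotc_eq, Matrix.star_mulVec, Matrix.dotProduct_mulVec, Matrix.vecMul_vecMul,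
    ← Matrix.star_eq_conjTranspose, star_mul_self_UG, Matrix.vecMul_one]

lemma nsq_mulVec {D : ℕ} (U : UG D) (v : Fin D → ℂ) :
    nsq ((U : Matrix (Fin D) (Fin D) ℂ).mulVec v) = nsq v := by
  have := dotc_mulVec U v v
  rw [dotc_self, dotc_self] at this
  exact_mod_cast this

lemma nsq_nonneg {D : ℕ} (v : Fin D → ℂ) : 0 ≤ nsq v := Finset.sum_nonneg fun _ _ => by positivity

lemma nsq_eq_zero {D : ℕ} {v : Fin D → ℂ} (h : nsq v = 0) : v = 0 := by
  ext i
  have := (Finset.sum_eq_zero_iff_of_nonneg (fun _ _ => by positivity)).1 h i (Finset.mem_univ i)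
  simpa using this

lemma mulVec_vol {D : ℕ} (U : UG D) :
    (volume : Measure (Fin D → ℂ)).map (fun v => (U : Matrix (Fin D) (Fin D) ℂ).mulVec v) = volume := by
  let f : (Fin D → ℂ) →ₗ[ℝ] (Fin D → ℂ) := (Matrix.toLin' (U : Matrix (Fin D) (Fin D) ℂ)).restrictScalars ℝ
  have hdet : |LinearMap.det f| = 1 := by
    rw [LinearMap.det_restrictScalars, LinearMap.det_toLin', Algebra.norm_complex_eq]
    have h : Matrix.det (U : Matrix (Fin D) (Fin D) ℂ) ∈ unitary ℂ := Matrix.det_of_mem_unitary U.2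
    have h2 := Unitary.star_mul_self_of_mem h
    have h3 : Complex.normSq (Matrix.det (U : Matrix (Fin D) (Fin D) ℂ)) = 1 := by
      have h4 := Complex.normSq_eq_conj_mul_self (z := Matrix.det (U : Matrix (Fin D) (Fin D) ℂ))
      have h5 : (starRingEnd ℂ) (Matrix.det (U : Matrix (Fin D) (Fin D) ℂ)) * (Matrix.det (U : Matrix (Fin D) (Fin D) ℂ)) = 1 := h2
      rw [h5] at h4
      exact_mod_cast h4
    simp [h3]
  have hne : LinearMap.det f ≠ 0 := by
    intro h; rw [h] at hdet; simp at hdet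
  have := Measure.map_linearMap_addHaar_eq_smul_addHaar (volume : Measure (Fin D → ℂ)) hne
  rw [abs_inv, hdet] at this
  simp only [inv_one, ENNReal.ofReal_one, one_smul] at this
  exact this

lemma measurable_mulVec {D : ℕ} (A : Matrix (Fin D) (Fin D) ℂ) : Measurable (fun v => A.mulVec v) :=
  (Continuous.matrix_mulVec continuous_const continuous_id).measurable

lemma gD_invariant {D : ℕ} (U : UG D) :
    MeasurePreserving (fun v => (U : Matrix (Fin D) (Fin D) ℂ).mulVec v) (gD D) (gD D) := by
  refine ⟨measurable_mulVec _, ?_⟩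
  have hdens : ∀ z : Fin D → ℂ, ∏ i, ENNReal.ofReal (Real.pi⁻¹ * Real.exp (-‖z i‖ ^ 2)) =
      ENNReal.ofReal (Real.pi⁻¹ ^ D * Real.exp (-nsq z)) := by
    intro z
    rw [← ENNReal.ofReal_prod_of_nonneg (fun _ _ => by positivity), Finset.prod_mul_distrib, ← Real.exp_sum]
    simp [nsq]
  have hm : Measurable fun z : Fin D → ℂ => ENNReal.ofReal (Real.pi⁻¹ ^ D * Real.exp (-nsq z)) := by
    unfold nsq; fun_prop
  have e : gD D = (volume : Measure (Fin D → ℂ)).withDensity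
      (fun z => ENNReal.ofReal (Real.pi⁻¹ ^ D * Real.exp (-nsq z))) := by
    rw [gD_eq]; simp_rw [hdens]
  rw [e]
  ext s hs
  rw [Measure.map_apply (measurable_mulVec _) hs, withDensity_apply _ hs,
    withDensity_apply _ (measurable_mulVec _ hs)]
  conv_rhs => rw [← mulVec_vol U]
  rw [setLIntegral_map hs hm (measurable_mulVec _)]
  simp_rw [nsq_mulVec]

lemma frame {D : ℕ} (i j : Fin D) (hij : i ≠ j) (u v : Fin D → ℂ) (hu : nsq u = 1) (hv : nsq v = 1)
    (huv : dotc u v = 0) : ∃ V : UG D, (V : Matrix (Fin D) (Fin D) ℂ).mulVec (Pi.single i 1) = u ∧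
      (V : Matrix (Fin D) (Fin D) ℂ).mulVec (Pi.single j 1) = v := by
  classical
  let E := EuclideanSpace ℂ (Fin D)
  let w : Fin D → E := fun k => if k = i then WithLp.toLp 2 u else WithLp.toLp 2 v
  have hin : ∀ x y : Fin D → ℂ, inner ℂ (WithLp.toLp 2 x : E) (WithLp.toLp 2 y) = dotc x y := by
    intro x y
    rw [EuclideanSpace.inner_eq_star_dotProduct, dotc_eq, dotProduct_comm]
  have hvu : dotc v u = 0 := by
    have : dotc v u = star (dotc u v) := by
      simp [dotc, mul_comm]
    rw [this, huv, star_zero]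
  have how : Orthonormal ℂ (({i, j} : Set (Fin D)).domRestrict w) := by
    rw [orthonormal_iff_ite]
    rintro ⟨k, hk⟩ ⟨l, hl⟩
    simp only [Set.mem_insert_iff, Set.mem_singleton_iff] at hk hl
    rcases hk with rfl | rfl <;> rcases hl with rfl | rfl <;>
      simp [-inner_self_eq_norm_sq_to_K, Set.domRestrict, w, hij, hij.symm, hin, huv, hvu, dotc_self, hu, hv]
  obtain ⟨b, hb⟩ := how.exists_orthonormalBasis_extension_of_card_eq (by simp [E])
  let M := (EuclideanSpace.basisFun (Fin D) ℂ).toBasis.toMatrix b.toBasis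
  have hM : M ∈ Matrix.unitaryGroup (Fin D) ℂ := by
    have := (EuclideanSpace.basisFun (Fin D) ℂ).toMatrix_orthonormalBasis_mem_unitary b
    simpa [M] using this
  have hcol : ∀ k, M.mulVec (Pi.single k 1) = (b k).ofLp := by
    intro k
    ext l
    simp [M, Module.Basis.toMatrix_apply]
  refine ⟨⟨M, hM⟩, ?_, ?_⟩
  · show M.mulVec _ = _
    rw [hcol, hb i (by simp)]; simp [w]
  · show M.mulVec _ = _
    rw [hcol, hb j (by simp)]; simp [w, hij.symm]

end

section
open MeasureTheory Filter ProbabilityTheory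


lemma dotc_smul_right {D : ℕ} (c : ℂ) (v w : Fin D → ℂ) : dotc v (c • w) = c * dotc v w := by
  rw [dotc_eq, dotc_eq, dotProduct_smul, smul_eq_mul]

lemma dotc_smul_left {D : ℕ} (c : ℂ) (v w : Fin D → ℂ) :
    dotc (c • v) w = (starRingEnd ℂ) c * dotc v w := by
  rw [dotc_eq, dotc_eq, star_smul, smul_dotProduct, smul_eq_mul]; rfl

lemma dotc_sub_right {D : ℕ} (u v w : Fin D → ℂ) : dotc u (v - w) = dotc u v - dotc u w := by
  rw [dotc_eq, dotc_eq, dotc_eq, dotProduct_sub]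

lemma dotc_sub_left {D : ℕ} (u v w : Fin D → ℂ) : dotc (u - v) w = dotc u w - dotc v w := by
  rw [dotc_eq, dotc_eq, dotc_eq, star_sub, sub_dotProduct]

lemma dotc_add_left {D : ℕ} (u v w : Fin D → ℂ) : dotc (u + v) w = dotc u w + dotc v w := by
  rw [dotc_eq, dotc_eq, dotc_eq, star_add, add_dotProduct]

lemma nsq_smul {D : ℕ} (c : ℂ) (v : Fin D → ℂ) : nsq (c • v) = ‖c‖ ^ 2 * nsq v := by
  simp [nsq, mul_pow, Finset.mul_sum]

lemma dotc_herm {D : ℕ} {P : Matrix (Fin D) (Fin D) ℂ} (hP2 : P.IsHermitian) (v w : Fin D → ℂ) :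
    dotc v (P.mulVec w) = dotc (P.mulVec v) w := by
  rw [dotc_eq, dotc_eq, Matrix.star_mulVec, hP2.eq, Matrix.dotProduct_mulVec]

/-- unnormalised Gram-Schmidt -/
def hp {D : ℕ} (g h : Fin D → ℂ) : Fin D → ℂ := (nsq g : ℂ) • h - (dotc g h) • g

/-- the event -/
def TT {D : ℕ} (P : Matrix (Fin D) (Fin D) ℂ) (a : ℝ) (g h : Fin D → ℂ) : Prop :=
  a * nsq g * nsq (hp g h) ≤ ‖dotc g (P.mulVec (hp g h))‖ ^ 2

lemma hp_mulVec {D : ℕ} (U : UG D) (g h : Fin D → ℂ) :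
    hp ((U : Matrix (Fin D) (Fin D) ℂ).mulVec g) ((U : Matrix (Fin D) (Fin D) ℂ).mulVec h) =
      (U : Matrix (Fin D) (Fin D) ℂ).mulVec (hp g h) := by
  simp only [hp, nsq_mulVec, dotc_mulVec, Matrix.mulVec_sub, Matrix.mulVec_smul]

lemma dotc_hp {D : ℕ} (g h : Fin D → ℂ) : dotc g (hp g h) = 0 := by
  rw [hp, dotc_sub_right, dotc_smul_right, dotc_smul_right, dotc_self]; ring

lemma mulVec_mulVec_inv {D : ℕ} (U : UG D) (v : Fin D → ℂ) :
    (U : Matrix (Fin D) (Fin D) ℂ).mulVec (((U⁻¹ : UG D) : Matrix (Fin D) (Fin D) ℂ).mulVec v) = v := by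
  rw [Matrix.mulVec_mulVec, ← Submonoid.coe_mul, mul_inv_cancel]; simp

lemma dotc_rot {D : ℕ} (U : UG D) (P : Matrix (Fin D) (Fin D) ℂ) (φ ψ : Fin D → ℂ) :
    dotc φ ((rotProj U P).mulVec ψ) = dotc (((U⁻¹ : UG D) : Matrix (Fin D) (Fin D) ℂ).mulVec φ)
      (P.mulVec (((U⁻¹ : UG D) : Matrix (Fin D) (Fin D) ℂ).mulVec ψ)) := by
  rw [← dotc_mulVec U (((U⁻¹ : UG D) : Matrix (Fin D) (Fin D) ℂ).mulVec φ), mulVec_mulVec_inv, rotProj,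
    ← Matrix.mulVec_mulVec, ← Matrix.mulVec_mulVec]

lemma frame2 {D : ℕ} (hD : 2 ≤ D) (φ ψ u v : Fin D → ℂ) (hφ : nsq φ = 1) (hψ : nsq ψ = 1)
    (hφψ : dotc φ ψ = 0) (hu : nsq u = 1) (hv : nsq v = 1)
    (huv : dotc u v = 0) : ∃ V : UG D, (V : Matrix (Fin D) (Fin D) ℂ).mulVec φ = u ∧
      (V : Matrix (Fin D) (Fin D) ℂ).mulVec ψ = v := by
  have hij : (⟨0, by omega⟩ : Fin D) ≠ ⟨1, by omega⟩ := by simp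
  obtain ⟨V1, h1, h2⟩ := frame _ _ hij φ ψ hφ hψ hφψ
  obtain ⟨V2, h3, h4⟩ := frame _ _ hij u v hu hv huv
  refine ⟨V2 * V1⁻¹, ?_, ?_⟩
  · rw [← h1, Matrix.mulVec_mulVec, ← Submonoid.coe_mul, inv_mul_cancel_right, h3]
  · rw [← h2, Matrix.mulVec_mulVec, ← Submonoid.coe_mul, inv_mul_cancel_right, h4]

lemma haar_eq {D : ℕ} (hD : 2 ≤ D) (P : Matrix (Fin D) (Fin D) ℂ) (a : ℝ)
    (φ ψ : Fin D → ℂ) (hφ : nsq φ = 1) (hψ : nsq ψ = 1) (hφψ : dotc φ ψ = 0)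
    (μ : Measure (UG D)) [μ.IsHaarMeasure] (g h : Fin D → ℂ) (hg : nsq g ≠ 0) (hh : nsq (hp g h) ≠ 0) :
    μ {U : UG D | TT P a (((U⁻¹ : UG D) : Matrix (Fin D) (Fin D) ℂ).mulVec g)
      (((U⁻¹ : UG D) : Matrix (Fin D) (Fin D) ℂ).mulVec h)} =
    μ {U : UG D | a ≤ ‖dotc φ ((rotProj U P).mulVec ψ)‖ ^ 2} := by
  have hg' : 0 < nsq g := lt_of_le_of_ne (nsq_nonneg _) hg.symm
  have hh' : 0 < nsq (hp g h) := lt_of_le_of_ne (nsq_nonneg _) hh.symm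
  set G := nsq g with hG
  set H := nsq (hp g h) with hH
  have norm1 : ∀ x : ℝ, 0 < x → ‖((√x : ℝ) : ℂ)‖ ^ 2 = x := by
    intro x hx
    rw [Complex.norm_real, Real.norm_eq_abs, sq_abs, Real.sq_sqrt hx.le]
  have norm2 : ∀ x : ℝ, 0 < x → ((√x : ℝ) : ℂ) ≠ 0 := by
    intro x hx
    exact_mod_cast (Real.sqrt_pos.2 hx).ne'
  obtain ⟨V, hV1, hV2⟩ := frame2 hD φ ψ (((√G : ℝ) : ℂ)⁻¹ • g) (((√H : ℝ) : ℂ)⁻¹ • hp g h) hφ hψ hφψ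
    (by rw [nsq_smul, norm_inv, inv_pow, norm1 _ hg']; exact inv_mul_cancel₀ hg)
    (by rw [nsq_smul, norm_inv, inv_pow, norm1 _ hh']; exact inv_mul_cancel₀ hh)
    (by rw [dotc_smul_left, dotc_smul_right, dotc_hp]; simp)
  have hgV : g = ((√G : ℝ) : ℂ) • (V : Matrix (Fin D) (Fin D) ℂ).mulVec φ := by
    rw [hV1, smul_smul, mul_inv_cancel₀ (norm2 _ hg'), one_smul]
  have hhV : hp g h = ((√H : ℝ) : ℂ) • (V : Matrix (Fin D) (Fin D) ℂ).mulVec ψ := by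
    rw [hV2, smul_smul, mul_inv_cancel₀ (norm2 _ hh'), one_smul]
  conv_rhs => rw [← measure_preimage_mul μ V⁻¹]
  congr 1
  ext U
  simp only [Set.mem_preimage, Set.mem_ofPred_eq]
  rw [dotc_rot, TT, hp_mulVec, nsq_mulVec, nsq_mulVec, ← hG, ← hH, mul_inv_rev, inv_inv, Submonoid.coe_mul,
    ← Matrix.mulVec_mulVec, ← Matrix.mulVec_mulVec]
  rw [hhV]
  conv_lhs => rw [hgV]
  rw [Matrix.mulVec_smul, Matrix.mulVec_smul, Matrix.mulVec_smul, dotc_smul_left, dotc_smul_right,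
    norm_mul, norm_mul, RCLike.norm_conj, mul_pow, mul_pow, norm1 _ hg', norm1 _ hh']
  rw [show ∀ x : ℝ, G * (H * x) = x * G * H by intro x; ring]
  rw [mul_le_mul_iff_left₀ hh', mul_le_mul_iff_left₀ hg']

lemma dotc_single {D : ℕ} (i : Fin D) (y : Fin D → ℂ) : dotc (Pi.single i 1) y = y i := by
  rw [dotc_eq, ← Pi.single_star]; simp

lemma slice {D n : ℕ} (hD : D = n + 3) (P : Matrix (Fin D) (Fin D) ℂ)
    (hP1 : P * P = P) (hP2 : P.IsHermitian) (a : ℝ) (ha : 0 ≤ a) (g : Fin D → ℂ) (hg : 0 < nsq g)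
    (t : ℝ) (ht0 : 0 < t) (ht1 : t < 1) (ht : dotc g (P.mulVec g) = (t * nsq g : ℝ)) :
    gD D {h | TT P a g h} = ENNReal.ofReal ((max 0 (1 - a / (t * (1 - t)))) ^ (n + 1)) ∧
    ∀ᵐ h ∂(gD D), nsq (hp g h) ≠ 0 := by
  set G := nsq g with hG
  have ht1' : 0 < 1 - t := by linarith
  obtain ⟨s, hs, hss⟩ : ∃ s : ℝ, 0 < s ∧ s ^ 2 = t * (1 - t) :=
    ⟨√(t * (1 - t)), by positivity, Real.sq_sqrt (by positivity)⟩
  obtain ⟨r, hr, hrr⟩ : ∃ r : ℝ, 0 < r ∧ r ^ 2 = G := ⟨√G, by positivity, Real.sq_sqrt hg.le⟩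
  have hPP : dotc (P.mulVec g) (P.mulVec g) = (t * G : ℝ) := by
    rw [← dotc_herm hP2, Matrix.mulVec_mulVec, hP1, ht]
  have ht' : dotc (P.mulVec g) g = (t * G : ℝ) := by rw [← dotc_herm hP2, ht]
  set i0 : Fin D := ⟨0, by omega⟩
  set i1 : Fin D := ⟨1, by omega⟩
  have hij : i0 ≠ i1 := by simp [i0, i1]
  set w0 := P.mulVec g - (t : ℂ) • g with hw0
  have hw0n : nsq w0 = r ^ 2 * s ^ 2 := by
    have : dotc w0 w0 = ((r ^ 2 * s ^ 2 : ℝ) : ℂ) := by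
      rw [hw0, dotc_sub_left, dotc_sub_right, dotc_sub_right, dotc_smul_left, dotc_smul_left,
        dotc_smul_right, dotc_smul_right, hPP, ht, ht', dotc_self, ← hG, hss, hrr, Complex.conj_ofReal]
      push_cast; ring
    rw [dotc_self] at this
    exact_mod_cast this
  have hgw : dotc g w0 = 0 := by
    rw [hw0, dotc_sub_right, dotc_smul_right, ht, dotc_self, ← hG]; push_cast; ring
  have nr : ∀ x : ℝ, 0 < x → ‖(x : ℂ)⁻¹‖ ^ 2 = (x ^ 2)⁻¹ := by
    intro x hx; rw [norm_inv, inv_pow, Complex.norm_real, Real.norm_eq_abs, sq_abs]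
  obtain ⟨V, hV1, hV2⟩ := frame i0 i1 hij ((r : ℂ)⁻¹ • g) (((r * s : ℝ) : ℂ)⁻¹ • w0)
    (by rw [nsq_smul, nr _ hr, hrr, ← hG]; exact inv_mul_cancel₀ hg.ne')
    (by rw [nsq_smul, nr _ (by positivity), hw0n, mul_pow]; exact inv_mul_cancel₀ (by positivity))
    (by rw [dotc_smul_left, dotc_smul_right, hgw]; simp)
  have hr' : (r : ℂ) ≠ 0 := by exact_mod_cast hr.ne'
  have hrs' : ((r * s : ℝ) : ℂ) ≠ 0 := by exact_mod_cast (by positivity : (0:ℝ) < r * s).ne'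
  have hgV : g = (V : Matrix (Fin D) (Fin D) ℂ).mulVec ((r : ℂ) • Pi.single i0 1) := by
    rw [Matrix.mulVec_smul, hV1, smul_smul, mul_inv_cancel₀ hr', one_smul]
  have hwV : w0 = (V : Matrix (Fin D) (Fin D) ℂ).mulVec (((r * s : ℝ) : ℂ) • Pi.single i1 1) := by
    rw [Matrix.mulVec_smul, hV2, smul_smul, mul_inv_cancel₀ hrs', one_smul]
  have hPg : P.mulVec g = w0 + (t : ℂ) • g := by rw [hw0]; abel
  set T : Finset (Fin D) := Finset.univ \ {i0, i1} with hT
  have hTc : T.card = n + 1 := by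
    rw [hT, Finset.card_sdiff_of_subset (Finset.subset_univ _), Finset.card_pair hij]; simp [hD]
  have hyk : ∀ k : Fin D → ℂ, hp ((r : ℂ) • Pi.single i0 1) k = (G : ℂ) • (k - k i0 • Pi.single i0 1) := by
    intro k
    rw [hp, nsq_smul, dotc_smul_left, dotc_single]
    have : nsq (Pi.single i0 1 : Fin D → ℂ) = 1 := by
      have := dotc_single i0 (Pi.single i0 (1:ℂ))
      rw [dotc_self] at this
      simpa using this
    rw [this, ← hrr, Complex.norm_real, Real.norm_eq_abs, sq_abs, Complex.conj_ofReal, smul_sub, smul_smul, smul_smul]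
    congr 2
    · push_cast; ring
    · push_cast; ring
  have hny : ∀ k : Fin D → ℂ, nsq (k - k i0 • Pi.single i0 1) = ‖k i1‖ ^ 2 + ∑ j ∈ T, ‖k j‖ ^ 2 := by
    intro k
    rw [nsq, ← Finset.sum_sdiff (Finset.subset_univ {i0, i1}), Finset.sum_pair hij, add_comm]
    congr 1
    · simp [hij.symm]
    · refine Finset.sum_congr rfl fun j hj => ?_
      have : j ≠ i0 := by
        rintro rfl
        simp [hT] at hj
      simp [this]
  have hnk : ∀ k : Fin D → ℂ, nsq (hp g ((V : Matrix (Fin D) (Fin D) ℂ).mulVec k)) =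
      G ^ 2 * (‖k i1‖ ^ 2 + ∑ j ∈ T, ‖k j‖ ^ 2) := by
    intro k
    conv_lhs => rw [hgV]
    rw [hp_mulVec, nsq_mulVec, hyk, nsq_smul, hny, Complex.norm_real, Real.norm_eq_abs, sq_abs]
  have hdk : ∀ k : Fin D → ℂ, ‖dotc g (P.mulVec (hp g ((V : Matrix (Fin D) (Fin D) ℂ).mulVec k)))‖ ^ 2 =
      G ^ 3 * (t * (1 - t)) * ‖k i1‖ ^ 2 := by
    intro k
    rw [dotc_herm hP2, hPg, dotc_add_left, dotc_smul_left, dotc_hp, mul_zero, add_zero, hwV]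
    conv_lhs => rw [hgV]
    rw [hp_mulVec, dotc_mulVec, hyk, dotc_smul_left, dotc_single, Complex.conj_ofReal]
    simp only [Pi.smul_apply, Pi.sub_apply, Pi.single_apply, hij.symm, smul_eq_mul, if_false, mul_zero, sub_zero]
    rw [norm_mul, norm_mul, mul_pow, mul_pow, Complex.norm_real, Complex.norm_real, Real.norm_eq_abs,
      Real.norm_eq_abs, sq_abs, sq_abs, mul_pow, hrr, hss]
    ring
  have hmeas : Measurable fun h => nsq (hp g h) := by
    unfold hp nsq dotc; fun_prop
  have hmeas2 : Measurable fun h => ‖dotc g (P.mulVec (hp g h))‖ ^ 2 := by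
    unfold hp nsq dotc Matrix.mulVec dotProduct; fun_prop
  constructor
  · rw [← gD_tail D n i1 T (by simp [hT]) hTc a (t * (1 - t)) ha (by positivity)]
    rw [← (gD_invariant V).measure_preimage]
    · congr 1
      ext k
      simp only [Set.mem_preimage, Set.mem_ofPred_eq]
      rw [TT, hnk, hdk, ← hG]
      have hG3 : 0 < G ^ 3 := by positivity
      rw [show ∀ x : ℝ, a * G * (G ^ 2 * x) = G ^ 3 * (a * x) by intro x; ring, mul_assoc, mul_le_mul_iff_right₀ hG3]
    · exact (measurableSet_le (by fun_prop) hmeas2).nullMeasurableSet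
  · rw [← (gD_invariant V).map_eq, ae_map_iff (measurable_mulVec _).aemeasurable]
    · have : ∀ᵐ k ∂(gD D), k i1 ≠ 0 := Measure.ae_eval_ne (μ := fun _ : Fin D => g1) i1 0
      filter_upwards [this] with k hk
      rw [hnk]
      have : 0 < ‖k i1‖ ^ 2 := by positivity
      have h2 : 0 ≤ ∑ j ∈ T, ‖k j‖ ^ 2 := Finset.sum_nonneg fun _ _ => by positivity
      positivity
    · exact (hmeas (measurableSet_singleton 0)).compl

end

section
open MeasureTheory Filter


lemma diagz {D d : ℕ} (P : Matrix (Fin D) (Fin D) ℂ)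
    (hP1 : P * P = P) (hP2 : P.IsHermitian) (hPr : P.rank = d) :
    ∃ (V : UG D) (S : Finset (Fin D)), S.card = d ∧ ∀ z : Fin D → ℂ,
      dotc ((V : Matrix (Fin D) (Fin D) ℂ).mulVec z) (P.mulVec ((V : Matrix (Fin D) (Fin D) ℂ).mulVec z)) =
        ((∑ i ∈ S, ‖z i‖ ^ 2 : ℝ) : ℂ) := by
  classical
  set V : UG D := hP2.eigenvectorUnitary with hV
  set Dg : Matrix (Fin D) (Fin D) ℂ := Matrix.diagonal (fun i => (hP2.eigenvalues i : ℂ)) with hDg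
  have hsp : P = (V : Matrix (Fin D) (Fin D) ℂ) * Dg * star (V : Matrix (Fin D) (Fin D) ℂ) := by
    have := hP2.spectral_theorem
    rw [Unitary.conjStarAlgAut_apply] at this
    exact this
  have hVV := star_mul_self_UG V
  have hPV : P * (V : Matrix (Fin D) (Fin D) ℂ) = (V : Matrix (Fin D) (Fin D) ℂ) * Dg := by
    conv_lhs => rw [hsp]
    rw [Matrix.mul_assoc, hVV, Matrix.mul_one]
  have hDD : Dg * Dg = Dg := by
    have h1 : (V : Matrix (Fin D) (Fin D) ℂ) * (Dg * Dg) = (V : Matrix (Fin D) (Fin D) ℂ) * Dg := by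
      rw [← Matrix.mul_assoc, ← hPV, Matrix.mul_assoc, ← hPV, ← Matrix.mul_assoc, hP1]
    have h2 := congrArg (fun M => star (V : Matrix (Fin D) (Fin D) ℂ) * M) h1
    simpa [← Matrix.mul_assoc, hVV] using h2
  have hev : ∀ i, hP2.eigenvalues i = 0 ∨ hP2.eigenvalues i = 1 := by
    intro i
    have := congrFun (congrFun hDD i) i
    rw [hDg, Matrix.diagonal_mul_diagonal, Matrix.diagonal_apply_eq, Matrix.diagonal_apply_eq] at this
    have h : hP2.eigenvalues i * hP2.eigenvalues i = hP2.eigenvalues i := by exact_mod_cast this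
    by_cases h0 : hP2.eigenvalues i = 0
    · exact Or.inl h0
    · exact Or.inr (mul_left_cancel₀ h0 (by rw [h, mul_one]))
  refine ⟨V, Finset.univ.filter (fun i => hP2.eigenvalues i ≠ 0), ?_, ?_⟩
  · rw [← hPr, hP2.rank_eq_card_non_zero_eigs, Fintype.card_subtype]
  · intro z
    rw [Matrix.mulVec_mulVec, hPV, ← Matrix.mulVec_mulVec, dotc_mulVec, Finset.sum_filter, dotc]
    push_cast
    refine Finset.sum_congr rfl fun i _ => ?_
    rw [hDg, Matrix.mulVec_diagonal]
    rcases hev i with h | h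
    · simp [h]
    · simp [h, Complex.conj_mul']

instance (D : ℕ) : SecondCountableTopology (Matrix (Fin D) (Fin D) ℂ) :=
  inferInstanceAs (SecondCountableTopology (Fin D → Fin D → ℂ))

lemma TT_cont {D : ℕ} (P : Matrix (Fin D) (Fin D) ℂ) (a : ℝ) :
    IsClosed {p : UG D × ((Fin D → ℂ) × (Fin D → ℂ)) |
      TT P a (((p.1⁻¹ : UG D) : Matrix (Fin D) (Fin D) ℂ).mulVec p.2.1)
        (((p.1⁻¹ : UG D) : Matrix (Fin D) (Fin D) ℂ).mulVec p.2.2)} := by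
  have hc : Continuous fun p : UG D × ((Fin D → ℂ) × (Fin D → ℂ)) =>
      ((p.1⁻¹ : UG D) : Matrix (Fin D) (Fin D) ℂ) := by fun_prop
  have h1 := Continuous.matrix_mulVec hc (continuous_fst.comp continuous_snd)
  have h2 := Continuous.matrix_mulVec hc (continuous_snd.comp continuous_snd)
  have h0 : IsClosed {q : (Fin D → ℂ) × (Fin D → ℂ) | TT P a q.1 q.2} := by
    unfold TT
    refine isClosed_le ?_ ?_
    · unfold hp nsq dotc; fun_prop
    · unfold hp nsq dotc Matrix.mulVec dotProduct; fun_prop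
  exact h0.preimage (h1.prodMk h2)

lemma TT_meas {D : ℕ} (P : Matrix (Fin D) (Fin D) ℂ) (a : ℝ) :
    MeasurableSet {q : (Fin D → ℂ) × (Fin D → ℂ) | TT P a q.1 q.2} := by
  unfold TT
  refine measurableSet_le ?_ ?_
  · unfold hp nsq dotc; fun_prop
  · unfold hp nsq dotc Matrix.mulVec dotProduct; fun_prop

lemma main_lintegral (D p q : ℕ) (hp1 : 1 ≤ p) (hq1 : 1 ≤ q) (hD : D = p + q + 2)
    (P : Matrix (Fin D) (Fin D) ℂ) (hP1 : P * P = P) (hP2 : P.IsHermitian) (hPr : P.rank = p + 1)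
    (φ ψ : Fin D → ℂ) (hφ : nsq φ = 1) (hψ : nsq ψ = 1) (hφψ : dotc φ ψ = 0)
    (a : ℝ) (ha0 : 0 ≤ a)
    (μ : Measure (UG D)) [μ.IsHaarMeasure] [IsProbabilityMeasure μ] :
    μ {U : UG D | a ≤ ‖dotc φ ((rotProj U P).mulVec ψ)‖ ^ 2} =
      ∫⁻ t in Set.Ioo 0 1, ENNReal.ofReal ((p + q + 1).factorial / (p.factorial * q.factorial)
        * (t ^ p * (1 - t) ^ q)) * ENNReal.ofReal ((max 0 (1 - a / (t * (1 - t)))) ^ (p + q)) := by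
  obtain ⟨V, S, hS, hVS⟩ := diagz P hP1 hP2 hPr
  obtain ⟨n, hn⟩ : ∃ n, p + q = n + 1 := ⟨p + q - 1, by omega⟩
  have hDn : D = n + 3 := by omega
  have hSc : Sᶜ.card = q + 1 := by
    rw [Finset.card_compl, hS, Fintype.card_fin]; omega
  -- good g
  have hgood : ∀ᵐ z ∂(gD D), 0 < ∑ i ∈ S, ‖z i‖ ^ 2 ∧ 0 < ∑ i ∈ Sᶜ, ‖z i‖ ^ 2 := by
    have h1 := gm_ae_pos p
    rw [← gD_map_sum D p S hS] at h1
    have h2 := gm_ae_pos q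
    rw [← gD_map_sum D q Sᶜ hSc] at h2
    filter_upwards [ae_of_ae_map (Measurable.aemeasurable (by fun_prop)) h1,
      ae_of_ae_map (Measurable.aemeasurable (by fun_prop)) h2] with z h3 h4 using ⟨h3, h4⟩
  have hslice : ∀ᵐ z ∂(gD D), nsq ((V : Matrix (Fin D) (Fin D) ℂ).mulVec z) ≠ 0 ∧
      gD D {h | TT P a ((V : Matrix (Fin D) (Fin D) ℂ).mulVec z) h} =
        (fun t : ℝ => ENNReal.ofReal ((max 0 (1 - a / (t * (1 - t)))) ^ (p + q)))
          ((∑ i ∈ S, ‖z i‖ ^ 2) / (∑ i ∈ S, ‖z i‖ ^ 2 + ∑ i ∈ Sᶜ, ‖z i‖ ^ 2)) ∧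
      ∀ᵐ h ∂(gD D), nsq (hp ((V : Matrix (Fin D) (Fin D) ℂ).mulVec z) h) ≠ 0 := by
    filter_upwards [hgood] with z hz
    obtain ⟨hx, hy⟩ := hz
    have hns : nsq ((V : Matrix (Fin D) (Fin D) ℂ).mulVec z) =
        ∑ i ∈ S, ‖z i‖ ^ 2 + ∑ i ∈ Sᶜ, ‖z i‖ ^ 2 := by
      rw [nsq_mulVec, nsq, Finset.sum_add_sum_compl]
    have hd := hVS z
    set x := ∑ i ∈ S, ‖z i‖ ^ 2
    set y := ∑ i ∈ Sᶜ, ‖z i‖ ^ 2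
    have hxy : 0 < x + y := by positivity
    have hs := slice hDn P hP1 hP2 a ha0 ((V : Matrix (Fin D) (Fin D) ℂ).mulVec z) (by rw [hns]; exact hxy)
      (x / (x + y)) (by positivity) (by rw [div_lt_one hxy]; linarith)
      (by rw [hd, hns, div_mul_cancel₀ _ hxy.ne'])
    refine ⟨by rw [hns]; exact hxy.ne', ?_, hs.2⟩
    rw [hs.1, ← hn]
  -- the constant
  have hprodnull : ∀ᵐ r ∂((gD D).prod (gD D)), nsq r.1 ≠ 0 ∧ nsq (hp r.1 r.2) ≠ 0 := by
    have hmA : MeasurableSet {r : (Fin D → ℂ) × (Fin D → ℂ) | nsq r.1 ≠ 0 ∧ nsq (hp r.1 r.2) ≠ 0} := by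
      have m1 : Measurable fun r : (Fin D → ℂ) × (Fin D → ℂ) => nsq r.1 := by unfold nsq; fun_prop
      have m2 : Measurable fun r : (Fin D → ℂ) × (Fin D → ℂ) => nsq (hp r.1 r.2) := by
        unfold hp nsq dotc; fun_prop
      exact (m1 (measurableSet_singleton 0)).compl.inter (m2 (measurableSet_singleton 0)).compl
    rw [Measure.ae_prod_iff_ae_ae hmA]
    have hsl := (gD_invariant V⁻¹).quasiMeasurePreserving.ae hslice
    filter_upwards [hsl] with z hz
    rw [mulVec_mulVec_inv] at hz
    filter_upwards [hz.2.2] with h hh using ⟨hz.1, hh⟩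
  have hprobG : IsProbabilityMeasure ((gD D).prod (gD D)) := inferInstance
  have hsG : SFinite ((gD D).prod (gD D)) := Measure.prod.instSFinite
  set c := μ {U : UG D | a ≤ ‖dotc φ ((rotProj U P).mulVec ψ)‖ ^ 2} with hc
  set A : Set (UG D × ((Fin D → ℂ) × (Fin D → ℂ))) := {p |
      TT P a (((p.1⁻¹ : UG D) : Matrix (Fin D) (Fin D) ℂ).mulVec p.2.1)
        (((p.1⁻¹ : UG D) : Matrix (Fin D) (Fin D) ℂ).mulVec p.2.2)} with hA
  have hAm : MeasurableSet A := (TT_cont P a).measurableSet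
  have e1 : (μ.prod ((gD D).prod (gD D))) A = c := by
    rw [Measure.prod_apply_symm (μ := μ) (ν := (gD D).prod (gD D)) hAm]
    have : ∀ᵐ r ∂((gD D).prod (gD D)), μ ((fun x => (x, r)) ⁻¹' A) = c := by
      filter_upwards [hprodnull] with r hr
      exact haar_eq (by omega) P a φ ψ hφ hψ hφψ μ r.1 r.2 hr.1 hr.2
    rw [lintegral_congr_ae this]; simp
  have e2 : (μ.prod ((gD D).prod (gD D))) A = ((gD D).prod (gD D)) {r | TT P a r.1 r.2} := by
    rw [Measure.prod_apply (μ := μ) (ν := (gD D).prod (gD D)) hAm]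
    have : ∀ U : UG D, ((gD D).prod (gD D)) (Prod.mk U ⁻¹' A) =
        ((gD D).prod (gD D)) {r | TT P a r.1 r.2} := by
      intro U
      exact ((gD_invariant U⁻¹).prod (gD_invariant U⁻¹)).measure_preimage (TT_meas P a).nullMeasurableSet
    simp_rw [this]; simp
  rw [← e1, e2, Measure.prod_apply (TT_meas P a), ← (gD_invariant V).lintegral_comp
    (measurable_measure_prodMk_left (TT_meas P a)),
    ← gD_beta D p q S Sᶜ disjoint_compl_right hS hSc _ (by fun_prop)]
  apply lintegral_congr_ae
  filter_upwards [hslice] with z hz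
  exact hz.2.1

theorem final_int (p q : ℕ) (hpq : 0 < p + q) (a : ℝ) (ha0 : 0 ≤ a) (ha1 : a ≤ 1 / 4) (C : ℝ) (hC : 0 ≤ C) :
    (∫⁻ t in Set.Ioo (0:ℝ) 1, ENNReal.ofReal (C
        * (t ^ p * (1 - t) ^ q)) * ENNReal.ofReal ((max 0 (1 - a / (t * (1 - t)))) ^ (p + q))).toReal =
      C * ∫ x in (1 / 2 - Real.sqrt (1 / 4 - a))..(1 / 2 + Real.sqrt (1 / 4 - a)),
          (x * (1 - x) - a) ^ (p + q) / (x ^ q * (1 - x) ^ p) := by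
  set s := √(1 / 4 - a) with hs
  have hs0 : 0 ≤ s := Real.sqrt_nonneg _
  have hss : s ^ 2 = 1 / 4 - a := Real.sq_sqrt (by linarith)
  have hs2 : s ≤ 1 / 2 := by nlinarith
  set I := Set.Ioo (1 / 2 - s) (1 / 2 + s) with hI
  have hsub : I ⊆ Set.Ioo 0 1 := Set.Ioo_subset_Ioo (by linarith) (by linarith)
  set f : ℝ → ℝ := fun x => C * ((x * (1 - x) - a) ^ (p + q) / (x ^ q * (1 - x) ^ p)) with hf
  have hIpos : ∀ x ∈ I, 0 < x * (1 - x) - a := by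
    rintro x ⟨h1, h2⟩
    nlinarith
  have hfpos : ∀ x ∈ I, 0 ≤ f x := by
    intro x hx
    have h1 := hIpos x hx
    have h2 := (hsub hx).1
    have h3 : 0 < 1 - x := by linarith [(hsub hx).2]
    simp only [hf]; positivity
  have e1 : ∀ t ∈ Set.Ioo (0:ℝ) 1, ENNReal.ofReal (C
        * (t ^ p * (1 - t) ^ q)) * ENNReal.ofReal ((max 0 (1 - a / (t * (1 - t)))) ^ (p + q)) =
      I.indicator (fun t => ENNReal.ofReal (f t)) t := by
    intro t ht
    have h2 := ht.1
    have h3 : 0 < 1 - t := by linarith [ht.2]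
    have e : 1 - a / (t * (1 - t)) = (t * (1 - t) - a) / (t * (1 - t)) := by field_simp
    by_cases hI' : t ∈ I
    · rw [Set.indicator_of_mem hI', ← ENNReal.ofReal_mul (by positivity)]
      congr 1
      have := hIpos t hI'
      rw [e, max_eq_right (by positivity), hf, div_pow, mul_pow]
      field_simp
      ring
    · rw [Set.indicator_of_notMem hI']
      have : t * (1 - t) - a ≤ 0 := by
        by_contra hcon
        push Not at hcon
        have : (t - 1 / 2) ^ 2 < s ^ 2 := by nlinarith
        have := abs_lt_of_sq_lt_sq' this hs0
        exact hI' ⟨by linarith [this.1], by linarith [this.2]⟩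
      rw [e, max_eq_left (div_nonpos_of_nonpos_of_nonneg this (by positivity)), zero_pow hpq.ne']
      simp
  rw [setLIntegral_congr_fun measurableSet_Ioo e1, lintegral_indicator measurableSet_Ioo,
    Measure.restrict_restrict measurableSet_Ioo, Set.inter_eq_left.2 hsub,
    ← intervalIntegral.integral_const_mul, intervalIntegral.integral_of_le (by linarith),
    ← Measure.restrict_congr_set Ioo_ae_eq_Ioc, integral_eq_lintegral_of_nonneg_ae]
  · filter_upwards [ae_restrict_mem measurableSet_Ioo] with x hx using hfpos x hx
  · apply Measurable.aestronglyMeasurable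
    fun_prop


end

theorem stmt13 (D d : ℕ) (hd1 : 1 < d) (hd2 : d + 1 < D)
    (P : Matrix (Fin D) (Fin D) ℂ) (hP1 : P * P = P) (hP2 : P.IsHermitian) (hPr : P.rank = d)
    (φ ψ : Fin D → ℂ) (hφ : nsq φ = 1) (hψ : nsq ψ = 1) (hφψ : dotc φ ψ = 0)
    (a : ℝ) (ha0 : 0 ≤ a) (ha1 : a ≤ 1 / 4)
    (μ : Measure (UG D)) [μ.IsHaarMeasure] [IsProbabilityMeasure μ] :
    (μ {U : UG D | a ≤ ‖dotc φ ((rotProj U P).mulVec ψ)‖ ^ 2}).toReal =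
      (Nat.factorial (D - 1) : ℝ) / (Nat.factorial (d - 1) * Nat.factorial (D - d - 1)) *
        ∫ x in (1 / 2 - Real.sqrt (1 / 4 - a))..(1 / 2 + Real.sqrt (1 / 4 - a)),
          (x * (1 - x) - a) ^ (D - 2) / (x ^ (D - d - 1) * (1 - x) ^ (d - 1)) := by
  obtain ⟨p, hp⟩ : ∃ p, d = p + 1 := ⟨d - 1, by omega⟩
  obtain ⟨q, hq⟩ : ∃ q, D = p + q + 2 := ⟨D - d - 1, by omega⟩
  rw [main_lintegral D p q (by omega) (by omega) hq P hP1 hP2 (by rw [hPr, hp]) φ ψ hφ hψ hφψ a ha0 μ,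
    final_int p q (by omega) a ha0 ha1 _ (by positivity)]
  rw [show D - 1 = p + q + 1 by omega, show d - 1 = p by omega, show D - d - 1 = q by omega,
    show D - 2 = p + q by omega]
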